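/- Let k be a field in which f! ≠ 0, for a positive integer f. Then the polynomials binom(X, f), binom(X+1, f), …, binom(X+f-1, f) (where binom(X+n, f) = (X+n)(X+n-1)⋯(X+n-f+1)/f!) form a k-basis of the vector space of polynomials of degree at most f with zero constant term. -/

import Mathlib

open Polynomial

/-- The polynomial `binom(X + n, f) = (X+n)(X+n-1)⋯(X+n-f+1)/f!` over a field `k`. -/
noncomputable def binomPoly (k : Type*) [Field k] (f : ℕ) (n : ℕ) : k[X] :=
  C ((f.factorial : k)⁻¹) * ∏ j ∈ Finset.range f, (X + C (n : k) - C (j : k))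

/-!
At a natural number `m` the polynomial `binom(X + n, f)` takes the value `binom(m + n, f)`. This
vanishes at `m = 0` because `n < f`, and along the points `f, f - 1, …, 1` the values of
`binom(X, f), …, binom(X + f - 1, f)` form a unitriangular matrix, so these `f` polynomials are
linearly independent. They span because the polynomials of degree at most `f` without constant term
are the multiples `X q` with `deg q < f`, a space of dimension `f`.
-/

theorem linearIndependent_of_dual_triangular {ι R M : Type*} [LinearOrder ι] [Ring R]
    [AddCommGroup M] [Module R M] (v : ι → M) (φ : ι → Module.Dual R M)
    (hlt : ∀ i j, j < i → φ i (v j) = 0) (hdiag : ∀ i, IsRightRegular (φ i (v i))) :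
    LinearIndependent R v := by
  rw [linearIndependent_iff]
  intro c hc
  by_contra hne
  have hsupp : c.support.Nonempty := Finsupp.support_nonempty_iff.mpr hne
  set i := c.support.max' hsupp
  have hi : i ∈ c.support := c.support.max'_mem hsupp
  have hother : ∀ j ∈ c.support, j ≠ i → c j * φ i (v j) = 0 := fun j hj hji ↦ by
    rw [hlt i j ((c.support.le_max' j hj).lt_of_ne hji), mul_zero]
  have hcoeff : c i * φ i (v i) = 0 := by
    have h := congrArg (φ i) hc
    simp only [Finsupp.linearCombination_apply, Finsupp.sum, map_sum, map_smul, smul_eq_mul,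
      map_zero] at h
    rwa [Finset.sum_eq_single_of_mem i hi hother] at h
  exact Finsupp.mem_support_iff.mp hi ((hdiag i).mul_right_eq_zero_iff.mp hcoeff)

theorem degree_X_mul_le_natCast_iff {R : Type*} [Semiring R] {n : ℕ} {q : R[X]} :
    degree (X * q) ≤ n ↔ q.degree < n := by
  rcases eq_or_ne q 0 with rfl | hq
  · simp
  · have : Nontrivial R := Polynomial.nontrivial_iff.mp (nontrivial_of_ne q 0 hq)
    rw [← natDegree_le_iff_degree_le, natDegree_X_mul hq, Nat.succ_le_iff,
      natDegree_lt_iff_degree_lt hq]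

theorem degreeLE_inf_ker_lcoeff_zero (R : Type*) [CommSemiring R] (n : ℕ) :
    degreeLE R n ⊓ LinearMap.ker (lcoeff R 0) =
      (degreeLT R n).map (LinearMap.mulLeft R (X : R[X])) := by
  ext p
  simp only [Submodule.mem_inf, mem_degreeLE, LinearMap.mem_ker, lcoeff_apply, Submodule.mem_map,
    mem_degreeLT, LinearMap.mulLeft_apply]
  constructor
  · rintro ⟨hdeg, hcoeff⟩
    obtain ⟨q, rfl⟩ := X_dvd_iff.mpr hcoeff
    exact ⟨q, degree_X_mul_le_natCast_iff.mp hdeg, rfl⟩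
  · rintro ⟨q, hq, rfl⟩
    exact ⟨degree_X_mul_le_natCast_iff.mpr hq, coeff_X_mul_zero q⟩

instance finite_degreeLE_inf_ker_lcoeff_zero (R : Type*) [CommSemiring R] (n : ℕ) :
    Module.Finite R ↥(degreeLE R n ⊓ LinearMap.ker (lcoeff R 0)) := by
  rw [degreeLE_inf_ker_lcoeff_zero]
  infer_instance

theorem finrank_degreeLE_inf_ker_lcoeff_zero (R : Type*) [CommRing R] [Nontrivial R] (n : ℕ) :
    Module.finrank R ↥(degreeLE R n ⊓ LinearMap.ker (lcoeff R 0)) = n := by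
  have hinj : Function.Injective (LinearMap.mulLeft R (X : R[X])) := monic_X.isRegular.left
  rw [degreeLE_inf_ker_lcoeff_zero, ← (Submodule.equivMapOfInjective _ hinj _).finrank_eq,
    (degreeLTEquiv R n).finrank_eq, Module.finrank_fin_fun]

section binomPoly

variable {k : Type*} [Field k] {f n : ℕ}

theorem degree_binomPoly_le : (binomPoly k f n).degree ≤ f := by
  have hprod : (∏ j ∈ Finset.range f, (X + C (n : k) - C (j : k))).natDegree = f := by
    simpa only [C_sub, sub_sub_eq_add_sub, Finset.card_range] using
      natDegree_finsetProd_X_sub_C_eq_card (Finset.range f) fun j ↦ (j : k) - n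
  exact degree_le_of_natDegree_le ((natDegree_C_mul_le _ _).trans_eq hprod)

theorem eval_binomPoly (x : k) :
    (binomPoly k f n).eval x = (f.factorial : k)⁻¹ * (descPochhammer k f).eval (x + n) := by
  simp [binomPoly, eval_prod, descPochhammer_eval_eq_prod_range]

theorem eval_natCast_binomPoly (hfac : (f.factorial : k) ≠ 0) (m : ℕ) :
    (binomPoly k f n).eval (m : k) = ((m + n).choose f : k) := by
  rw [eval_binomPoly, ← Nat.cast_add, descPochhammer_eval_eq_descFactorial,
    Nat.descFactorial_eq_factorial_mul_choose, Nat.cast_mul, inv_mul_cancel_left₀ hfac]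

theorem coeff_zero_binomPoly (hn : n < f) : (binomPoly k f n).coeff 0 = 0 := by
  have heval : (descPochhammer k f).eval (n : k) = 0 := descPochhammer_eval_coe_nat_of_lt hn
  rw [coeff_zero_eq_eval_zero, eval_binomPoly, zero_add, heval, mul_zero]

theorem binomPoly_mem_degreeLE_inf_ker_lcoeff_zero (hn : n < f) :
    binomPoly k f n ∈ degreeLE k f ⊓ LinearMap.ker (lcoeff k 0) :=
  ⟨mem_degreeLE.mpr degree_binomPoly_le, coeff_zero_binomPoly hn⟩

theorem linearIndependent_binomPoly (hfac : (f.factorial : k) ≠ 0) :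
    LinearIndependent k (fun n : Fin f ↦ binomPoly k f n) := by
  have heval (m n : Fin f) :
      leval ((f - m : ℕ) : k) (binomPoly k f n) = ((f - m + n : ℕ).choose f : k) :=
    eval_natCast_binomPoly hfac _
  refine linearIndependent_of_dual_triangular _ (fun m : Fin f ↦ leval ((f - m : ℕ) : k)) ?_ ?_
  · intro m n hnm
    have hlt : f - m + n < f := by omega
    rw [heval, Nat.choose_eq_zero_of_lt hlt, Nat.cast_zero]
  · intro n
    rw [heval, Nat.sub_add_cancel n.is_lt.le, Nat.choose_self, Nat.cast_one]
    exact isRegular_one.right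

end binomPoly

/-- If `f! ≠ 0` in a field `k` and `f > 0`, then
`binom(X, f), binom(X+1, f), …, binom(X+f-1, f)` form a `k`-basis of the space of
polynomials of degree at most `f` with zero constant term. -/
theorem binomPoly_basis
    (k : Type*) [Field k] (f : ℕ) (hf : 0 < f) (hfac : (f.factorial : k) ≠ 0) :
    LinearIndependent k (fun n : Fin f => binomPoly k f (n : ℕ)) ∧
    Submodule.span k (Set.range (fun n : Fin f => binomPoly k f (n : ℕ))) =
      Polynomial.degreeLE k (f : ℕ) ⊓ LinearMap.ker (Polynomial.lcoeff k 0) := by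
  have hli := linearIndependent_binomPoly hfac
  refine ⟨hli, Submodule.eq_of_le_of_finrank_eq ?_ ?_⟩
  · rw [Submodule.span_le, Set.range_subset_iff]
    exact fun n ↦ binomPoly_mem_degreeLE_inf_ker_lcoeff_zero n.is_lt
  · rw [finrank_span_eq_card hli, Fintype.card_fin, finrank_degreeLE_inf_ker_lcoeff_zero]
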